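/- arXiv:2006.00355 — 2 statements merged into one kernel-verified Lean document; each statement's English description precedes it below -/
import Mathlib

section
/- Let p be an odd prime, n ≥ 4 an integer, and t an integer with 1 ≤ t < n; set d = gcd(t, n) and assume n ≥ 3d, that n/d is odd, and that the equation a^{p^t+1} + 1 = 0 has a root a ∈ F_{p^n}. Let c ∈ F_{p^n} with c ≠ 1, and let G : F_{p^n} → F_{p^n} be given by G(x) = x^{p^n−2} + x^{p^t}. Then the c-differential uniformity of G satisfies 4 ≤ δ_{G,c} ≤ p^t + 4. -/
open Finset

/-- The `(c,a,b)` entry of the `c`-Difference Distribution Table of `G`: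
the number of `x` with `G (x + a) - c * G x = b`. -/
def cddt {F : Type*} [Field F] [Fintype F] [DecidableEq F]
    (G : F → F) (c a b : F) : ℕ :=
  (Finset.univ.filter fun x : F => G (x + a) - c * G x = b).card

/-- The `c`-differential uniformity of `G`: the maximum entry of the `c`-DDT,
where `a ≠ 0` is required only when `c = 1`. -/
def cdu {F : Type*} [Field F] [Fintype F] [DecidableEq F]
    (G : F → F) (c : F) : ℕ :=
  ((Finset.univ : Finset (F × F)).filter fun p => c = 1 → p.1 ≠ 0).sup
    fun p => cddt G c p.1 p.2

/-! Since `c ≠ 1`, the entries with `a = 0` are the fibre sizes of `G x = x⁻¹ + σ x`, where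
`σ x = x ^ p ^ t`. Take `v` with `D = σ v - v ≠ 0` and `s` with `σ s * s * D = σ D`. Under the
substitution `x = σ y / (y * s)` the equation `G x = b`, for a suitable `b`, becomes the vanishing
of the Moore determinant of `1, v, y`. This holds for every nonzero `y = α + β * v` with `α, β` in
the fixed field `K` of `σ`, and `y, y'` give the same `x` exactly when `y / y'` lies in `K`, so the
fibre has at least `|K| + 1` points, and `|K| = p ^ gcd t n`.

Such an `s` is a `(p ^ t + 1)`-th root of the square `D ^ (p ^ t - 1)`. With `q = p ^ t` and
`m = n / gcd t n` odd, `q + 1` divides `q ^ m + 1`, while `r ^ (q ^ m + 1) = r ^ 2` for all `r`,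
so every square is a `(q + 1)`-th power.

The upper bound counts the roots of the polynomial left after clearing denominators, and adds the
two points `0` and `-a` where `x⁻¹` or `(x + a)⁻¹` takes the junk value `0⁻¹ = 0`. -/

section Table

variable {F : Type*} [Field F] [Fintype F] [DecidableEq F]

lemma cddt_zero_left (G : F → F) {c : F} (hc : c ≠ 1) (b : F) :
    cddt G c 0 ((1 - c) * b) = #{x | G x = b} := by
  refine congrArg card (filter_congr fun x _ => ?_)
  rw [add_zero, ← one_sub_mul, mul_right_inj' (sub_ne_zero.mpr hc.symm)]

lemma card_fiber_le_cdu (G : F → F) {c : F} (hc : c ≠ 1) (b : F) :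
    #{x | G x = b} ≤ cdu G c := by
  rw [← cddt_zero_left G hc]
  exact le_sup (f := fun r : F × F => cddt G c r.1 r.2) (b := (0, (1 - c) * b)) (by simp [hc])

end Table

section UpperBound

open Polynomial

variable {F : Type*} [Field F]

/-- The numerator, after multiplication by `x (x + a)`, of `G (x + a) - c * G x - b` for
`G x = x⁻¹ + x ^ q`. Its roots bound the corresponding entry of the `c`-DDT. -/
noncomputable def diffNumerator (q : ℕ) (c a b : F) : F[X] :=
  X * (X + C a) * ((X + C a) ^ q - C c * X ^ q - C b) + (X - C c * (X + C a))

lemma eval_diffNumerator (q : ℕ) (c a b : F) {x : F} (hx : x ≠ 0) (hxa : x + a ≠ 0) :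
    (diffNumerator q c a b).eval x =
      x * (x + a) * ((x + a)⁻¹ + (x + a) ^ q - c * (x⁻¹ + x ^ q) - b) := by
  simp only [diffNumerator, eval_add, eval_mul, eval_sub, eval_X, eval_C, eval_pow]
  field_simp
  ring

lemma natDegree_pow_sub_pow_sub_C_le (q : ℕ) (c a b : F) :
    ((X + C a) ^ q - C c * X ^ q - C b : F[X]).natDegree ≤ q := by
  compute_degree!

lemma natDegree_diffNumerator_le (q : ℕ) (c a b : F) :
    (diffNumerator q c a b).natDegree ≤ q + 2 := by
  have hquad : (X * (X + C a) : F[X]).natDegree ≤ 2 := by compute_degree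
  have hlin : (X - C c * (X + C a) : F[X]).natDegree ≤ 1 := by compute_degree
  refine natDegree_add_le_of_degree_le ?_ (hlin.trans (by omega))
  exact (natDegree_mul_le_of_le hquad (natDegree_pow_sub_pow_sub_C_le q c a b)).trans_eq
    (add_comm 2 q)

lemma coeff_diffNumerator {q : ℕ} (hq : q ≠ 0) (c a b : F) :
    (diffNumerator q c a b).coeff (2 + q) = 1 - c := by
  have hquad : (X * (X + C a) : F[X]).natDegree ≤ 2 := by compute_degree
  have hquad_coeff : (X * (X + C a) : F[X]).coeff 2 = 1 := by simp [coeff_X_mul]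
  have hpow : ((X + C a : F[X]) ^ q).coeff q = 1 := by simp [coeff_X_add_C_pow]
  have hlin : (X - C c * (X + C a) : F[X]).natDegree ≤ 1 := by compute_degree
  rw [diffNumerator, coeff_add, coeff_eq_zero_of_natDegree_lt (p := X - _) (by omega),
    coeff_mul_add_eq_of_natDegree_le hquad (natDegree_pow_sub_pow_sub_C_le q c a b), hquad_coeff,
    coeff_sub, coeff_sub, hpow, coeff_C_mul, coeff_X_pow_self, coeff_C_of_ne_zero hq]
  ring

lemma cddt_inv_add_pow_le [Fintype F] [DecidableEq F] {q : ℕ} (hq : q ≠ 0) {c : F} (hc : c ≠ 1)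
    (a b : F) : cddt (fun x : F => x⁻¹ + x ^ q) c a b ≤ q + 4 := by
  set R := diffNumerator q c a b with hR
  have hR0 : R ≠ 0 := fun h => sub_ne_zero.mpr hc.symm <| by
    rw [← coeff_diffNumerator hq c a b, ← hR, h, coeff_zero]
  have hsub : ({x | (x + a)⁻¹ + (x + a) ^ q - c * (x⁻¹ + x ^ q) = b} : Finset F) ⊆
      R.roots.toFinset ∪ {0, -a} := by
    intro x hx
    simp only [mem_filter_univ] at hx
    simp only [mem_union, Multiset.mem_toFinset, mem_insert, mem_singleton, mem_roots hR0,
      IsRoot.def]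
    by_contra! h
    obtain ⟨hroot, hx0, hxa⟩ := h
    refine hroot ?_
    rw [eval_diffNumerator q c a b hx0 (mt eq_neg_of_add_eq_zero_left hxa), hx, sub_self,
      mul_zero]
  calc cddt (fun x : F => x⁻¹ + x ^ q) c a b
      ≤ #(R.roots.toFinset ∪ {0, -a}) := card_le_card hsub
    _ ≤ #R.roots.toFinset + #{0, -a} := card_union_le _ _
    _ ≤ (q + 2) + 2 := add_le_add ((Multiset.toFinset_card_le _).trans <| (card_roots' R).trans
        (natDegree_diffNumerator_le q c a b)) card_le_two

end UpperBound

section Fiber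

variable {F : Type*} [Field F] (σ : F →+* F)

lemma moore_relation {v α β y : F} (hα : σ α = α) (hβ : σ β = β) (hy : y = α + β * v) :
    (σ v - v) * σ (σ y) + σ (σ v - v) * y = (σ (σ v) - v) * σ y := by
  simp only [hy, map_add, map_mul, map_sub, hα, hβ]
  ring

lemma ne_zero_of_map_mul_mul_eq {D s : F} (hD : D ≠ 0) (hs : σ s * s * D = σ D) : s ≠ 0 := by
  rintro rfl
  exact (map_ne_zero σ).mpr hD (by rw [← hs, mul_zero, zero_mul])

lemma inv_add_map_div_mul {D B s y : F} (hD : D ≠ 0) (hs : σ s * s * D = σ D) (hy : y ≠ 0)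
    (hmoore : D * σ (σ y) + σ D * y = B * σ y) :
    (σ y / (y * s))⁻¹ + σ (σ y / (y * s)) = B / (D * σ s) := by
  have hs0 : s ≠ 0 := ne_zero_of_map_mul_mul_eq σ hD hs
  have hσs : σ s ≠ 0 := (map_ne_zero σ).mpr hs0
  have hσy : σ y ≠ 0 := (map_ne_zero σ).mpr hy
  rw [← hs] at hmoore
  rw [map_div₀, map_mul]
  field_simp
  linear_combination hmoore

lemma add_ne_zero_of_map_eq {v α : F} (hα : σ α = α) (hv : σ v ≠ v) : α + v ≠ 0 := by
  intro h
  rw [eq_neg_of_add_eq_zero_left h, map_neg, neg_inj] at hα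
  exact hv hα

lemma map_add_div_add_mul {v s α : F} (hα : σ α = α) (hv : σ v ≠ v) (hs0 : s ≠ 0) :
    σ (α + v) / ((α + v) * s) = s⁻¹ + (σ v - v) / ((α + v) * s) := by
  have hne : α + v ≠ 0 := add_ne_zero_of_map_eq σ hα hv
  rw [map_add, hα]
  field_simp
  ring

lemma card_fixed_add_one_le_card_fiber [Fintype F] [DecidableEq F] {v s : F} (hv : σ v ≠ v)
    (hs : σ s * s * (σ v - v) = σ (σ v - v)) :
    #{α | σ α = α} + 1 ≤ #{x | x⁻¹ + σ x = (σ (σ v) - v) / ((σ v - v) * σ s)} := by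
  have hD : σ v - v ≠ 0 := sub_ne_zero.mpr hv
  have hs0 : s ≠ 0 := ne_zero_of_map_mul_mul_eq σ hD hs
  have hinj : Set.InjOn (fun α => σ (α + v) / ((α + v) * s)) ({α | σ α = α} : Finset F) := by
    intro α hα β hβ h
    simp only [coe_filter_univ, Set.mem_ofPred_eq] at hα hβ
    simpa only [map_add_div_add_mul σ hα hv hs0, map_add_div_add_mul σ hβ hv hs0,
      add_right_inj, div_eq_mul_inv, mul_right_inj' hD, inv_inj, mul_left_inj' hs0,
      add_left_inj] using h
  have hnotMem : s⁻¹ ∉ image (fun α => σ (α + v) / ((α + v) * s)) {α | σ α = α} := by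
    simp only [mem_image, mem_filter_univ, not_exists, not_and]
    intro α hα h
    rw [map_add_div_add_mul σ hα hv hs0, add_eq_left] at h
    exact div_ne_zero hD (mul_ne_zero (add_ne_zero_of_map_eq σ hα hv) hs0) h
  rw [← card_image_of_injOn hinj, ← card_insert_of_notMem hnotMem]
  refine card_le_card ?_
  simp only [insert_subset_iff, image_subset_iff, mem_filter_univ]
  constructor
  · simpa using inv_add_map_div_mul σ hD hs one_ne_zero
      (moore_relation σ (map_one σ) (map_zero σ) (by ring))
  · exact fun α hα => inv_add_map_div_mul σ hD hs (add_ne_zero_of_map_eq σ hα hv)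
      (moore_relation σ hα (map_one σ) (by ring))

end Fiber

section Frobenius

lemma exists_pow_succ_eq_sq_of_pow_pow_eq_self {M : Type*} [Monoid M] {r : M} {q m : ℕ}
    (hm : Odd m) (hr : r ^ q ^ m = r) : ∃ s : M, s ^ (q + 1) = r ^ 2 := by
  obtain ⟨k, hk⟩ : q + 1 ∣ q ^ m + 1 := by simpa using hm.nat_add_dvd_pow_add_pow q 1
  exact ⟨r ^ k, by rw [← pow_mul, mul_comm k, ← hk, pow_succ, hr, sq]⟩

variable {F : Type*} [Field F]

lemma isSquare_pow_char_pow_sub_one [Finite F] (p t : ℕ) [CharP F p] (x : F) :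
    IsSquare (x ^ (p ^ t - 1)) := by
  rcases (CharP.char_is_prime F p).eq_two_or_odd' with rfl | hodd
  · exact FiniteField.isSquare_of_char_two (ringChar.eq F 2) _
  · exact (Nat.Odd.sub_odd hodd.pow odd_one).isSquare_pow x

lemma pow_pow_div_gcd_eq_self [Fintype F] {p n : ℕ} (hF : Fintype.card F = p ^ n) (t : ℕ)
    (x : F) : x ^ (p ^ t) ^ (n / t.gcd n) = x := by
  have hexp : t * (n / t.gcd n) = n * (t / t.gcd n) := by
    rw [← Nat.mul_div_assoc _ (Nat.gcd_dvd_right t n),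
      ← Nat.mul_div_assoc _ (Nat.gcd_dvd_left t n), mul_comm]
  rw [← pow_mul, hexp, pow_mul, ← hF, FiniteField.pow_card_pow]

lemma exists_pow_mul_mul_eq_pow [Fintype F] {p n t : ℕ} (hp : p.Prime)
    (hF : Fintype.card F = p ^ n) (hodd : Odd (n / t.gcd n)) (D : F) :
    ∃ s : F, s ^ p ^ t * s * D = D ^ p ^ t := by
  have : Fact p.Prime := ⟨hp⟩
  have : CharP F p := charP_of_card_eq_prime_pow hF
  obtain ⟨r, hr⟩ := isSquare_pow_char_pow_sub_one p t D
  obtain ⟨s, hs⟩ :=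
    exists_pow_succ_eq_sq_of_pow_pow_eq_self hodd (pow_pow_div_gcd_eq_self hF t r)
  exact ⟨s, by rw [← pow_succ, hs, sq, ← hr, pow_sub_one_mul (pow_ne_zero t hp.ne_zero)]⟩

variable [Fintype F]

lemma card_filter_pow_eq_self [DecidableEq F] {q : ℕ} (hq : q ≠ 0) :
    #{x : F | x ^ q = x} = (Fintype.card F - 1).gcd (q - 1) + 1 := by
  have hunits : #{u : Fˣ | u ^ (q - 1) = 1} = (Fintype.card F - 1).gcd (q - 1) := by
    rw [← Fintype.card_units, ← Nat.card_eq_fintype_card, ← IsCyclic.card_powMonoidHom_ker,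
      ← Fintype.card_subtype, ← Nat.card_eq_fintype_card]
    rfl
  have hzero : (0 : F) ∉ image Units.val {u : Fˣ | u ^ (q - 1) = 1} := by simp
  have hset : ({x : F | x ^ q = x} : Finset F) =
      insert 0 (image Units.val {u : Fˣ | u ^ (q - 1) = 1}) := by
    ext x
    simp only [mem_filter_univ, mem_insert, mem_image]
    rcases eq_or_ne x 0 with rfl | hx
    · simp [hq]
    lift x to Fˣ using hx.isUnit
    simp only [Units.ne_zero, false_or, Units.val_inj, exists_eq_right]
    rw [← Units.val_pow_eq_pow_val, Units.val_inj, ← pow_sub_one_mul hq, mul_eq_right]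
  rw [hset, card_insert_of_notMem hzero, card_image_of_injective _ Units.val_injective, hunits]

lemma one_lt_of_card_eq_pow {q n : ℕ} (hF : Fintype.card F = q ^ n) : 1 < q :=
  lt_of_pow_lt_pow_left₀ n (Nat.zero_le q) (by rw [one_pow, ← hF]; exact Fintype.one_lt_card)

lemma card_filter_pow_pow_eq_self [DecidableEq F] {q n : ℕ} (hF : Fintype.card F = q ^ n)
    (t : ℕ) : #{x : F | x ^ q ^ t = x} = q ^ t.gcd n := by
  have hq : 0 < q := (one_lt_of_card_eq_pow hF).pos
  rw [card_filter_pow_eq_self (pow_pos hq t).ne', hF, Nat.pow_sub_one_gcd_pow_sub_one,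
    Nat.gcd_comm, Nat.sub_add_cancel (pow_pos hq _)]

lemma exists_pow_pow_ne_self {q n t : ℕ} (hF : Fintype.card F = q ^ n) (ht : ¬n ∣ t) :
    ∃ v : F, v ^ q ^ t ≠ v := by
  classical
  by_contra! h
  have hcard := card_filter_pow_pow_eq_self hF t
  rw [filter_true_of_mem fun x _ => h x, card_univ, hF] at hcard
  have hgcd := Nat.pow_right_injective (one_lt_of_card_eq_pow hF) hcard
  exact ht (Nat.gcd_eq_right_iff_dvd.mp hgcd.symm)

end Frobenius

lemma pow_gcd_add_one_le_cdu {F : Type*} [Field F] [Fintype F] [DecidableEq F] {p n t : ℕ}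
    (hp : p.Prime) (hF : Fintype.card F = p ^ n) (ht : ¬n ∣ t) (hodd : Odd (n / t.gcd n))
    {c : F} (hc : c ≠ 1) :
    p ^ t.gcd n + 1 ≤ cdu (fun x : F => x⁻¹ + x ^ p ^ t) c := by
  have : Fact p.Prime := ⟨hp⟩
  have : CharP F p := charP_of_card_eq_prime_pow hF
  obtain ⟨v, hv⟩ := exists_pow_pow_ne_self hF ht
  obtain ⟨s, hs⟩ := exists_pow_mul_mul_eq_pow hp hF hodd (v ^ p ^ t - v)
  have hfiber := card_fixed_add_one_le_card_fiber (iterateFrobenius F p t) hv hs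
  rw [← card_filter_pow_pow_eq_self hF t]
  exact hfiber.trans (card_fiber_le_cdu (fun x : F => x⁻¹ + x ^ p ^ t) hc _)

lemma pow_card_sub_two_eq_inv {F : Type*} [Field F] [Fintype F] (hF : Fintype.card F ≠ 2) (x : F) :
    x ^ (Fintype.card F - 2) = x⁻¹ := by
  have hcard : 2 < Fintype.card F := lt_of_le_of_ne Fintype.one_lt_card hF.symm
  rcases eq_or_ne x 0 with rfl | hx
  · rw [inv_zero, zero_pow (by omega)]
  · refine eq_inv_of_mul_eq_one_left ?_
    rw [← pow_succ, ← FiniteField.pow_card_sub_one_eq_one x hx]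
    congr 1
    omega

theorem cdu_inverse_plus_monomial_odd_char_odd_case_general
    {F : Type*} [Field F] [Fintype F] [DecidableEq F]
    (p n t : ℕ) (hp : p.Prime) (ht : ¬n ∣ t) (hodd : Odd (n / t.gcd n))
    (hF : Fintype.card F = p ^ n) (c : F) (hc : c ≠ 1)
    (G : F → F) (hG : ∀ x : F, G x = x ^ (p ^ n - 2) + x ^ p ^ t) :
    p ^ t.gcd n + 1 ≤ cdu G c ∧ cdu G c ≤ p ^ t + 4 := by
  have hn : n ≠ 1 := by
    rintro rfl
    exact ht (one_dvd t)
  have hF2 : Fintype.card F ≠ 2 := fun h =>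
    hn (Nat.Prime.eq_one_of_pow (hF.symm.trans h ▸ Nat.prime_two))
  obtain rfl : G = fun x => x⁻¹ + x ^ p ^ t := by
    ext x
    rw [hG, ← hF, pow_card_sub_two_eq_inv hF2]
  exact ⟨pow_gcd_add_one_le_cdu hp hF ht hodd hc,
    Finset.sup_le fun r _ => cddt_inv_add_pow_le (pow_ne_zero t hp.ne_zero) hc r.1 r.2⟩

theorem cdu_inverse_plus_monomial_odd_char_odd_case
    {F : Type*} [Field F] [Fintype F] [DecidableEq F]
    (p n t : ℕ) (hp : p.Prime) (hodd : Odd p)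
    (hn : 4 ≤ n) (ht1 : 1 ≤ t) (htn : t < n)
    (h3d : 3 * Nat.gcd t n ≤ n) (hoddq : Odd (n / Nat.gcd t n))
    (hroot : ∃ a : F, a ^ (p ^ t + 1) + 1 = 0)
    (hF : Fintype.card F = p ^ n)
    (c : F) (hc : c ≠ 1)
    (G : F → F) (hG : ∀ x : F, G x = x ^ (p ^ n - 2) + x ^ p ^ t) :
    4 ≤ cdu G c ∧ cdu G c ≤ p ^ t + 4 := by
  have hgcd : Nat.gcd t n ≠ 0 := Nat.gcd_ne_zero_left (by omega)
  have h3 : 3 ≤ p ^ Nat.gcd t n := (hp.odd_iff.mp hodd).trans (Nat.le_self_pow hgcd p)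
  have h := cdu_inverse_plus_monomial_odd_char_odd_case_general p n t hp
    (Nat.not_dvd_of_pos_of_lt ht1 htn) hoddq hF c hc G hG
  exact ⟨(Nat.succ_le_succ h3).trans h.1, h.2⟩
end

section
/- Let n ≥ 4 be an even integer and let c ∈ F_{2^n} be a nonzero cube (i.e., c = u^3 for some u ∈ F_{2^n}^*) with c ≠ 1. Then the polynomial x^3 + (c/(c+1))·x^2 + (c/(c+1))·x + c/(c+1) has exactly three distinct roots in F_{2^n}, and none of these roots equals 0 or 1. -/
open Finset

/-!
Over a field of characteristic two, multiplying the cubic by `c + 1` turns the equation into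
`x ^ 3 = c * (x + 1) ^ 3`, so the Möbius map `x ↦ x / (x + 1)` sends its roots bijectively to the
cube roots of `c`. The field contains a primitive cube root of unity because `3 ∣ 2 ^ n - 1` for
even `n`, hence a nonzero cube has exactly three cube roots.
-/

section FiniteField

variable {F : Type*} [Field F] [Finite F]

theorem exists_isPrimitiveRoot_of_dvd_card_sub_one {k : ℕ} (hk : k ∣ Nat.card F - 1) :
    ∃ ζ : F, IsPrimitiveRoot ζ k := by
  obtain ⟨m, hm⟩ := hk
  obtain ⟨g, hg⟩ := IsCyclic.exists_ofOrder_eq_natCard (α := Fˣ)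
  have hg_primitive : IsPrimitiveRoot (g : F) (Nat.card F - 1) := by
    rw [← Nat.card_units, ← hg]
    exact IsPrimitiveRoot.coe_units_iff.mpr (IsPrimitiveRoot.orderOf g)
  exact ⟨(g : F) ^ m, hg_primitive.pow (Nat.sub_pos_of_lt Finite.one_lt_card)
    (hm.trans (mul_comm k m))⟩

theorem exists_isPrimitiveRoot_pow_sub_one {p m n : ℕ} (hmn : m ∣ n) (hF : Nat.card F = p ^ n) :
    ∃ ζ : F, IsPrimitiveRoot ζ (p ^ m - 1) := by
  apply exists_isPrimitiveRoot_of_dvd_card_sub_one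
  rw [hF]
  exact Nat.pow_sub_one_dvd_pow_sub_one p hmn

end FiniteField

theorem ncard_setOfPred_pow_eq_pow {R : Type*} [CommRing R] [IsDomain R] {k : ℕ} {ζ u : R}
    (hζ : IsPrimitiveRoot ζ k) (hk : k ≠ 0) (hu : u ≠ 0) :
    {v : R | v ^ k = u ^ k}.ncard = k := by
  have roots_eq_image : {v : R | v ^ k = u ^ k} = (ζ ^ · * u) '' (Finset.range k : Set ℕ) := by
    ext v
    rw [Set.mem_ofPred_eq, ← Polynomial.mem_nthRoots (Nat.pos_of_ne_zero hk),
      hζ.nthRoots_eq rfl]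
    simp
  rw [roots_eq_image, (hζ.injOn_pow_mul hu).ncard_image, Set.ncard_coe_finset,
    Finset.card_range]

section MoebiusTransform

variable {F : Type*} [Field F] {k : ℕ} {c : F}

theorem bijOn_div_add_one (hk : k ≠ 0) (hc : c ≠ 1) :
    Set.BijOn (fun x : F => x / (x + 1)) {x | x ^ k = c * (x + 1) ^ k} {v | v ^ k = c} := by
  have add_one_ne_zero {x : F} (hx : x ^ k = c * (x + 1) ^ k) : x + 1 ≠ 0 := by
    intro h
    rw [h, zero_pow hk, mul_zero] at hx
    simp [eq_zero_of_pow_eq_zero hx] at h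
  have one_sub_ne_zero {v : F} (hv : v ^ k = c) : 1 - v ≠ 0 := by
    rw [sub_ne_zero]
    rintro rfl
    exact hc (hv.symm.trans (one_pow k))
  refine Set.InvOn.bijOn (f' := fun v => v / (1 - v)) ⟨?_, ?_⟩ ?_ ?_
  · intro x hx
    change x / (x + 1) / (1 - x / (x + 1)) = x
    have := add_one_ne_zero hx
    rw [one_sub_div this, add_sub_cancel_left, div_div_div_cancel_right₀ this, div_one]
  · intro v hv
    change v / (1 - v) / (v / (1 - v) + 1) = v
    have := one_sub_ne_zero hv
    rw [div_add_one this, add_sub_cancel, div_div_div_cancel_right₀ this, div_one]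
  · intro x hx
    change (x / (x + 1)) ^ k = c
    rw [div_pow, div_eq_iff (pow_ne_zero k (add_one_ne_zero hx))]
    exact hx
  · intro v hv
    change (v / (1 - v)) ^ k = c * (v / (1 - v) + 1) ^ k
    rw [div_add_one (one_sub_ne_zero hv), add_sub_cancel, div_pow, div_pow, one_pow, hv,
      mul_one_div]

theorem ncard_setOfPred_pow_eq_mul_add_one_pow {ζ u : F} (hζ : IsPrimitiveRoot ζ k) (hk : k ≠ 0)
    (hu : u ≠ 0) (huk : u ^ k ≠ 1) :
    {x : F | x ^ k = u ^ k * (x + 1) ^ k}.ncard = k :=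
  (bijOn_div_add_one hk huk).ncard_eq.trans (ncard_setOfPred_pow_eq_pow hζ hk hu)

end MoebiusTransform

section CharTwo

theorem ne_zero_and_ne_one_of_pow_eq_mul_add_one_pow {R : Type*} [Semiring R] [CharP R 2]
    {k : ℕ} (hk : k ≠ 0) {c x : R} (hc : c ≠ 0) (hx : x ^ k = c * (x + 1) ^ k) :
    x ≠ 0 ∧ x ≠ 1 := by
  have : Nontrivial R := nontrivial_of_ne c 0 hc
  constructor
  · rintro rfl
    simp [hk, hc.symm] at hx
  · rintro rfl
    simp [CharTwo.add_self_eq_zero, hk] at hx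

variable {F : Type*} [Field F] [CharP F 2] {c : F}

theorem cubic_eq_zero_iff_cube_eq_mul_add_one_cube (hc : c ≠ 1) (x : F) :
    x ^ 3 + c / (c + 1) * x ^ 2 + c / (c + 1) * x + c / (c + 1) = 0 ↔
      x ^ 3 = c * (x + 1) ^ 3 := by
  have two_eq_zero : (2 : F) = 0 := CharTwo.two_eq_zero
  have hc1 : c + 1 ≠ 0 := fun h => hc (CharTwo.add_eq_zero.mp h)
  have clear_denominators :
      (c + 1) * (x ^ 3 + c / (c + 1) * x ^ 2 + c / (c + 1) * x + c / (c + 1)) =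
        x ^ 3 - c * (x + 1) ^ 3 := by
    field_simp
    linear_combination (c * x ^ 3 + 2 * c * x ^ 2 + 2 * c * x + c) * two_eq_zero
  rw [← sub_eq_zero (a := x ^ 3), ← clear_denominators, mul_eq_zero, or_iff_right hc1]

theorem cubic_has_three_roots_for_cubes_general {ω : F} (hω : IsPrimitiveRoot ω 3)
    (hcube : ∃ u : F, u ≠ 0 ∧ c = u ^ 3) (hc : c ≠ 1) :
    {x : F | x ^ 3 + c / (c + 1) * x ^ 2 + c / (c + 1) * x + c / (c + 1) = 0}.ncard = 3 ∧
    ∀ x : F, x ^ 3 + c / (c + 1) * x ^ 2 + c / (c + 1) * x + c / (c + 1) = 0 →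
      x ≠ 0 ∧ x ≠ 1 := by
  obtain ⟨u, hu, rfl⟩ := hcube
  simp only [cubic_eq_zero_iff_cube_eq_mul_add_one_cube hc]
  exact ⟨ncard_setOfPred_pow_eq_mul_add_one_pow hω three_ne_zero hu hc, fun x =>
    ne_zero_and_ne_one_of_pow_eq_mul_add_one_pow three_ne_zero (pow_ne_zero 3 hu)⟩

end CharTwo

theorem cubic_has_three_roots_for_cubes
    {F : Type*} [Field F] [Fintype F] [DecidableEq F]
    (n : ℕ) (hn : 4 ≤ n) (hneven : Even n)
    (hF : Fintype.card F = 2 ^ n)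
    (c : F) (hcube : ∃ u : F, u ≠ 0 ∧ c = u ^ 3) (hc : c ≠ 1) :
    (Finset.univ.filter fun x : F =>
        x ^ 3 + c / (c + 1) * x ^ 2 + c / (c + 1) * x + c / (c + 1) = 0).card = 3 ∧
    ∀ x : F, x ^ 3 + c / (c + 1) * x ^ 2 + c / (c + 1) * x + c / (c + 1) = 0 →
      x ≠ 0 ∧ x ≠ 1 := by
  have : CharP F 2 := charP_of_card_eq_prime_pow hF
  obtain ⟨ω, hω⟩ : ∃ ω : F, IsPrimitiveRoot ω 3 :=
    exists_isPrimitiveRoot_pow_sub_one hneven.two_dvd (Nat.card_eq_fintype_card.trans hF)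
  rw [← Set.ncard_coe_finset, Finset.coe_filter_univ]
  exact cubic_has_three_roots_for_cubes_general hω hcube hc
end
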